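/- Let a_1(x), b_1(x), a_2(x), b_2(x) ∈ R and let C be the two-generator quasi-cyclic code of length 2n and index 2 generated by (a_1(x), b_1(x)) and (a_2(x), b_2(x)), i.e., the R-submodule of R^2 generated by these two pairs, viewed inside F_q^{2n}. Then C ⊆ C^{⊥s} if and only if a_1(x)b̄_1(x) - b_1(x)ā_1(x) ≡ 0 mod (x^n - 1), a_2(x)b̄_2(x) - b_2(x)ā_2(x) ≡ 0 mod (x^n - 1), and a_1(x)b̄_2(x) - b_1(x)ā_2(x) ≡ 0 mod (x^n - 1), where ā(x) denotes the transpose polynomial of a(x). -/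

import Mathlib

open Polynomial Matrix

noncomputable section

variable {F : Type*} [Field F] {n : ℕ}

/-- The symplectic inner product on `F^{2n}`. -/
def sympForm (u v : (Fin n ⊕ Fin n) → F) : F :=
  (∑ i : Fin n, u (Sum.inl i) * v (Sum.inr i)) -
    ∑ i : Fin n, v (Sum.inl i) * u (Sum.inr i)

lemma sympForm_add_left (u w v : (Fin n ⊕ Fin n) → F) :
    sympForm (u + w) v = sympForm u v + sympForm w v := by
  simp [sympForm, add_mul, mul_add, Finset.sum_add_distrib]
  ring

lemma sympForm_smul_left (c : F) (u v : (Fin n ⊕ Fin n) → F) :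
    sympForm (c • u) v = c * sympForm u v := by
  simp [sympForm, Finset.mul_sum, mul_sub, mul_assoc, mul_left_comm]

/-- The symplectic dual of a subspace of `F^{2n}`. -/
def sympDual (C : Submodule F ((Fin n ⊕ Fin n) → F)) :
    Submodule F ((Fin n ⊕ Fin n) → F) where
  carrier := {u | ∀ v ∈ C, sympForm u v = 0}
  add_mem' := by
    intro a b ha hb v hv
    rw [sympForm_add_left, ha v hv, hb v hv, add_zero]
  zero_mem' := by
    intro v hv
    have : (0 : (Fin n ⊕ Fin n) → F) = (0 : F) • 0 := by simp
    rw [this, sympForm_smul_left, zero_mul]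
  smul_mem' := by
    intro c a ha v hv
    rw [sympForm_smul_left, ha v hv, mul_zero]

/-- The `2n × 2n` symplectic matrix `Ω`. -/
def Omat (F : Type*) [Field F] (n : ℕ) : Matrix (Fin n ⊕ Fin n) (Fin n ⊕ Fin n) F :=
  Matrix.fromBlocks 0 1 (-1) 0

/-- The row space of a matrix. -/
def rowSpace {ι κ : Type*} (M : Matrix ι κ F) : Submodule F (κ → F) :=
  Submodule.span F (Set.range fun i => M i)

lemma monic_xn_sub_one (F : Type*) [Field F] {n : ℕ} (hn : n ≠ 0) :
    (X ^ n - 1 : F[X]).Monic := by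
  simpa using Polynomial.monic_X_pow_sub_C (1 : F) hn

/-- The coefficient vector of the canonical degree `< n` representative of an
element of `R = F[x]/(x^n - 1)`, as an `F`-linear map. -/
def toVecL (hn : n ≠ 0) : AdjoinRoot (X ^ n - 1 : F[X]) →ₗ[F] (Fin n → F) :=
  (LinearMap.pi fun i : Fin n => Polynomial.lcoeff F (i : ℕ)) ∘ₗ
    AdjoinRoot.modByMonicHom (monic_xn_sub_one F hn)

/-- The linear map `r ↦ (r·a, r·b)` from `R` to `F^{2n}`. -/
def QCgen (hn : n ≠ 0) (a b : AdjoinRoot (X ^ n - 1 : F[X])) :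
    AdjoinRoot (X ^ n - 1 : F[X]) →ₗ[F] ((Fin n ⊕ Fin n) → F) :=
  LinearMap.pi (Sum.elim
    (fun i => LinearMap.proj i ∘ₗ toVecL hn ∘ₗ LinearMap.mulRight F a)
    (fun i => LinearMap.proj i ∘ₗ toVecL hn ∘ₗ LinearMap.mulRight F b))

/-- The one-generator quasi-cyclic code of length `2n` and index `2`
generated by `(a(x), b(x))`, as a subspace of `F^{2n}`. -/
def QCcode (hn : n ≠ 0) (a b : AdjoinRoot (X ^ n - 1 : F[X])) :
    Submodule F ((Fin n ⊕ Fin n) → F) :=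
  LinearMap.range (QCgen hn a b)

/-- The element of `R` with coefficient vector `v`. -/
def fromVec (v : Fin n → F) : AdjoinRoot (X ^ n - 1 : F[X]) :=
  AdjoinRoot.mk _ (∑ i : Fin n, Polynomial.C (v i) * X ^ (i : ℕ))

/-- The transpose polynomial `ā(x) = x^n a(x⁻¹) mod (x^n - 1)`. -/
def transposePoly (hn : n ≠ 0) (a : AdjoinRoot (X ^ n - 1 : F[X])) :
    AdjoinRoot (X ^ n - 1 : F[X]) :=
  fromVec (fun i => toVecL hn a (-i))

/-- The cyclic code of length `n` generated by (the image of) `g(x)`. -/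
def cyclicCode (hn : n ≠ 0) (g : F[X]) : Submodule F (Fin n → F) :=
  LinearMap.range (toVecL hn ∘ₗ
    LinearMap.mulRight F (AdjoinRoot.mk (X ^ n - 1 : F[X]) g))

/-- The Hamming weight of a vector. -/
def hWeight {ι : Type*} (u : ι → F) : ℕ := {i | u i ≠ 0}.ncard


/-!
In the coordinates given by the monomials `1, x, …, x^(n-1)`, multiplication by `a(x)` in
`F[x]/(x^n - 1)` is the circulant matrix of the coefficient vector of `a`, and the transpose
polynomial `ā(x)` is the one whose circulant matrix is the transposed matrix. Multiplication by
`ā` is therefore adjoint to multiplication by `a` for the Euclidean inner product, so that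
`⟨(ra, rb), (sa', sb')⟩ₛ = ⟨ra, sb'⟩ - ⟨sa', rb⟩ = ⟨r(ab̄' - bā'), s⟩`. Since the Euclidean inner
product is nondegenerate, this vanishes for all `r` and `s` exactly when `ab̄' - bā' = 0`.
-/

section SymplecticDual

lemma neg_sympForm (u v : (Fin n ⊕ Fin n) → F) : -sympForm u v = sympForm v u :=
  neg_sub _ _

lemma le_sympDual_comm {C D : Submodule F ((Fin n ⊕ Fin n) → F)} :
    C ≤ sympDual D ↔ D ≤ sympDual C := by
  have le_sympDual_symm {C D : Submodule F ((Fin n ⊕ Fin n) → F)} (h : C ≤ sympDual D) :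
      D ≤ sympDual C := fun v hv u hu ↦ by
    rw [← neg_sympForm, h hu v hv, neg_zero]
  exact ⟨le_sympDual_symm, le_sympDual_symm⟩

lemma sympDual_sup (C D : Submodule F ((Fin n ⊕ Fin n) → F)) :
    sympDual (C ⊔ D) = sympDual C ⊓ sympDual D :=
  eq_of_forall_le_iff fun E ↦ by
    rw [le_sympDual_comm, sup_le_iff, le_inf_iff, le_sympDual_comm (C := C),
      le_sympDual_comm (C := D)]

end SymplecticDual

section CoefficientVector

lemma degree_X_pow_sub_one {A : Type*} [CommRing A] [Nontrivial A] (hn : n ≠ 0) :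
    (X ^ n - 1 : A[X]).degree = n := by
  rw [← C_1, degree_X_pow_sub_C hn.pos]

lemma fromVec_toVecL (hn : n ≠ 0) (a : AdjoinRoot (X ^ n - 1 : F[X])) :
    fromVec (toVecL hn a) = a := by
  have hmonic := monic_xn_sub_one F hn
  obtain ⟨p, rfl⟩ := AdjoinRoot.mk_surjective a
  have hdeg : (p %ₘ (X ^ n - 1)).degree < n := by
    simpa only [degree_X_pow_sub_one hn] using degree_modByMonic_lt p hmonic
  calc fromVec (toVecL hn (AdjoinRoot.mk _ p))
      = AdjoinRoot.mk _ (∑ i : Fin n, C ((p %ₘ (X ^ n - 1)).coeff i) * X ^ (i : ℕ)) := rfl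
    _ = AdjoinRoot.mk _ (p %ₘ (X ^ n - 1)) := by
      rw [sum_fin (fun i c ↦ C c * X ^ i) (by simp) hdeg, sum_C_mul_X_pow_eq]
    _ = AdjoinRoot.mk _ p := by
      rw [← AdjoinRoot.modByMonicHom_mk hmonic, AdjoinRoot.mk_leftInverse hmonic]

lemma toVecL_fromVec (hn : n ≠ 0) (v : Fin n → F) : toVecL hn (fromVec v) = v := by
  have hmod : (∑ i : Fin n, C (v i) * X ^ (i : ℕ)) %ₘ (X ^ n - 1) =
      ∑ i : Fin n, C (v i) * X ^ (i : ℕ) := by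
    rw [modByMonic_eq_self_iff (monic_xn_sub_one F hn), degree_X_pow_sub_one hn]
    exact degree_sum_fin_lt v
  ext i
  calc toVecL hn (fromVec v) i
      = ((∑ j : Fin n, C (v j) * X ^ (j : ℕ)) %ₘ (X ^ n - 1)).coeff i := rfl
    _ = v i := by simp [hmod, coeff_X_pow, ← Fin.ext_iff]

lemma toVecL_injective (hn : n ≠ 0) : Function.Injective (toVecL (F := F) hn) :=
  Function.LeftInverse.injective (fromVec_toVecL hn)

lemma toVecL_surjective (hn : n ≠ 0) : Function.Surjective (toVecL (F := F) hn) :=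
  Function.RightInverse.surjective (toVecL_fromVec hn)

end CoefficientVector

section Circulant

lemma pow_fin_val_add {M : Type*} [Monoid M] {x : M} (hx : x ^ n = 1) (i j : Fin n) :
    x ^ ((i + j : Fin n) : ℕ) = x ^ (i : ℕ) * x ^ (j : ℕ) := by
  rw [Fin.val_add, ← pow_eq_pow_mod _ hx, pow_add]

lemma root_X_pow_sub_one_pow (A : Type*) [CommRing A] (n : ℕ) :
    AdjoinRoot.root (X ^ n - 1 : A[X]) ^ n = 1 := by
  have hmk := AdjoinRoot.mk_self (f := (X ^ n - 1 : A[X]))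
  rwa [map_sub, map_pow, AdjoinRoot.mk_X, map_one, sub_eq_zero] at hmk

lemma fromVec_eq_sum_smul (v : Fin n → F) :
    fromVec v = ∑ i, v i • AdjoinRoot.root (X ^ n - 1 : F[X]) ^ (i : ℕ) := by
  simp [fromVec, Algebra.smul_def, AdjoinRoot.algebraMap_eq]

lemma fromVec_circulant_mulVec [NeZero n] (v w : Fin n → F) :
    fromVec (circulant v *ᵥ w) = fromVec v * fromVec w := by
  set x := AdjoinRoot.root (X ^ n - 1 : F[X])
  have hx : x ^ n = 1 := root_X_pow_sub_one_pow F n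
  simp only [fromVec_eq_sum_smul, mulVec, dotProduct, circulant_apply, Finset.sum_smul]
  calc ∑ i, ∑ j, (v (i - j) * w j) • x ^ (i : ℕ)
      = ∑ j, ∑ i, (v (i - j) * w j) • x ^ (i : ℕ) := Finset.sum_comm
    _ = ∑ j, ∑ i, (v i * w j) • x ^ ((i + j : Fin n) : ℕ) :=
      Finset.sum_congr rfl fun j _ ↦ Fintype.sum_equiv (Equiv.subRight j) _ _ (by simp)
    _ = ∑ j, ∑ i, (v i • x ^ (i : ℕ)) * (w j • x ^ (j : ℕ)) := by
      simp only [pow_fin_val_add hx, smul_mul_smul_comm]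
    _ = (∑ i, v i • x ^ (i : ℕ)) * ∑ j, w j • x ^ (j : ℕ) := by
      rw [Finset.sum_comm, Finset.sum_mul_sum]

lemma toVecL_mul (hn : n ≠ 0) (a b : AdjoinRoot (X ^ n - 1 : F[X])) :
    toVecL hn (a * b) = circulant (toVecL hn a) *ᵥ toVecL hn b := by
  have : NeZero n := ⟨hn⟩
  rw [← toVecL_fromVec hn (circulant _ *ᵥ _), fromVec_circulant_mulVec, fromVec_toVecL,
    fromVec_toVecL]

lemma circulant_toVecL_transposePoly (hn : n ≠ 0) (a : AdjoinRoot (X ^ n - 1 : F[X])) :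
    circulant (toVecL hn (transposePoly hn a)) = (circulant (toVecL hn a))ᵀ := by
  have : NeZero n := ⟨hn⟩
  rw [transposePoly, toVecL_fromVec, transpose_circulant]

lemma toVecL_mul_transposePoly_dotProduct (hn : n ≠ 0)
    (u v a : AdjoinRoot (X ^ n - 1 : F[X])) :
    toVecL hn (u * transposePoly hn a) ⬝ᵥ toVecL hn v = toVecL hn u ⬝ᵥ toVecL hn (v * a) := by
  rw [mul_comm u, mul_comm v, toVecL_mul, toVecL_mul, circulant_toVecL_transposePoly,
    mulVec_transpose, dotProduct_mulVec]

end Circulant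

section QuasiCyclic

lemma sympForm_QCgen (hn : n ≠ 0) (a b a' b' r s : AdjoinRoot (X ^ n - 1 : F[X])) :
    sympForm (QCgen hn a b r) (QCgen hn a' b' s) =
      toVecL hn (r * (a * transposePoly hn b' - b * transposePoly hn a')) ⬝ᵥ toVecL hn s :=
  calc sympForm (QCgen hn a b r) (QCgen hn a' b' s)
      = toVecL hn (r * a) ⬝ᵥ toVecL hn (s * b') - toVecL hn (s * a') ⬝ᵥ toVecL hn (r * b) := rfl
    _ = toVecL hn (r * a * transposePoly hn b') ⬝ᵥ toVecL hn s -
          toVecL hn (r * b * transposePoly hn a') ⬝ᵥ toVecL hn s := by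
      rw [dotProduct_comm (toVecL hn (s * a')), toVecL_mul_transposePoly_dotProduct,
        toVecL_mul_transposePoly_dotProduct]
    _ = toVecL hn (r * (a * transposePoly hn b' - b * transposePoly hn a')) ⬝ᵥ toVecL hn s := by
      rw [← sub_dotProduct, ← map_sub, mul_sub, mul_assoc, mul_assoc]

lemma QCcode_le_sympDual_QCcode_iff (hn : n ≠ 0)
    (a b a' b' : AdjoinRoot (X ^ n - 1 : F[X])) :
    QCcode hn a b ≤ sympDual (QCcode hn a' b') ↔
      a * transposePoly hn b' - b * transposePoly hn a' = 0 := by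
  constructor
  · intro h
    refine (map_eq_zero_iff _ (toVecL_injective hn)).mp (dotProduct_eq_zero _ fun w ↦ ?_)
    obtain ⟨s, rfl⟩ := toVecL_surjective hn w
    rw [← one_mul (a * _ - _), ← sympForm_QCgen]
    exact h ⟨1, rfl⟩ _ ⟨s, rfl⟩
  · rintro h _ ⟨r, rfl⟩ _ ⟨s, rfl⟩
    rw [sympForm_QCgen, h, mul_zero, map_zero, zero_dotProduct]

end QuasiCyclic

theorem twoGenQC_selfOrthogonal_iff_poly_general (hn : n ≠ 0)
    (a₁ b₁ a₂ b₂ : AdjoinRoot (X ^ n - 1 : F[X]))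
    (C : Submodule F ((Fin n ⊕ Fin n) → F))
    (hC : C = QCcode hn a₁ b₁ ⊔ QCcode hn a₂ b₂) :
    C ≤ sympDual C ↔
      a₁ * transposePoly hn b₁ - b₁ * transposePoly hn a₁ = 0 ∧
        a₂ * transposePoly hn b₂ - b₂ * transposePoly hn a₂ = 0 ∧
          a₁ * transposePoly hn b₂ - b₁ * transposePoly hn a₂ = 0 := by
  have cross : QCcode hn a₂ b₂ ≤ sympDual (QCcode hn a₁ b₁) ↔
      QCcode hn a₁ b₁ ≤ sympDual (QCcode hn a₂ b₂) := le_sympDual_comm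
  rw [hC, sympDual_sup, sup_le_iff, le_inf_iff, le_inf_iff, cross]
  simp only [QCcode_le_sympDual_QCcode_iff]
  tauto

/-- The two-generator QC code generated by `(a₁(x), b₁(x))`
and `(a₂(x), b₂(x))` is symplectic self-orthogonal iff
`a₁b̄₁ - b₁ā₁ ≡ 0`, `a₂b̄₂ - b₂ā₂ ≡ 0` and `a₁b̄₂ - b₁ā₂ ≡ 0 mod (xⁿ - 1)`. -/
theorem twoGenQC_selfOrthogonal_iff_poly
    {F : Type*} [Field F] [Fintype F] {n : ℕ} (hn : n ≠ 0)
    (a₁ b₁ a₂ b₂ : AdjoinRoot (X ^ n - 1 : F[X]))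
    (C : Submodule F ((Fin n ⊕ Fin n) → F))
    (hC : C = QCcode hn a₁ b₁ ⊔ QCcode hn a₂ b₂) :
    C ≤ sympDual C ↔
      a₁ * transposePoly hn b₁ - b₁ * transposePoly hn a₁ = 0 ∧
        a₂ * transposePoly hn b₂ - b₂ * transposePoly hn a₂ = 0 ∧
          a₁ * transposePoly hn b₂ - b₁ * transposePoly hn a₂ = 0 :=
  twoGenQC_selfOrthogonal_iff_poly_general hn a₁ b₁ a₂ b₂ C hC

end
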